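/- Fix an integer r ≥ 2. With a(n) := (1/3) n^{2/3}, define Σ_C(n) := Σ p(λ)^r, the sum over all partitions λ of n whose largest part T(λ) satisfies n − a(n) ≤ T(λ) ≤ n. Then n^r · Σ_C(n) → A_r as n → ∞, where A_r := Σ_{m=0}^∞ W_r(m); that is, Σ_C(n) ∼ A_r / n^r. -/

import Mathlib

open scoped Classical

/-- Cauchy's formula: `p(λ) = ∏_{j=1}^n 1/(j^{λ_j} ⬝ λ_j!)` is the probability that a
uniformly random permutation of `n` letters has cycle structure `λ`, where `λ_j` is the
number of parts of `λ` equal to `j`. -/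
noncomputable def pOf {n : ℕ} (μ : Nat.Partition n) : ℝ :=
  ∏ j ∈ Finset.Icc 1 n,
    1 / ((j : ℝ) ^ (μ.parts.count j) * (Nat.factorial (μ.parts.count j) : ℝ))

/-- `W_r(m) = Σ_{λ ⊢ m} p(λ)^r`: the probability that `r` independent uniformly random
permutations of `m` letters all have the same cycle structure (note `W r 0 = 1`). -/
noncomputable def W (r m : ℕ) : ℝ :=
  ∑ μ : Nat.Partition m, pOf μ ^ r

/-- `a(n) = n^{2/3}/3`. -/
noncomputable def aCut (n : ℕ) : ℝ := (1 / 3) * (n : ℝ) ^ ((2 : ℝ) / 3)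

/-- `Σ_C(n)`: the sum of `p(λ)^r` over all partitions `λ` of `n` whose largest part
`T(λ)` satisfies `n - a(n) ≤ T(λ) ≤ n`. -/
noncomputable def SigmaC (r n : ℕ) : ℝ :=
  ∑ μ ∈ Finset.univ.filter
      (fun μ : Nat.Partition n =>
        (n : ℝ) - aCut n ≤ (μ.parts.sup : ℝ) ∧ (μ.parts.sup : ℝ) ≤ (n : ℝ)),
    pOf μ ^ r

/-!
If `2 * a n < n`, a partition of `n` whose largest part is at least `n - a n` has a single part
`n - m > n / 2`, and removing it leaves an arbitrary partition of `m ≤ a n`. Its probability is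
`1 / (n - m)` times that of the remaining partition, so `n ^ r * Σ_C(n)` is the sum of
`(n / (n - m)) ^ r * W_r(m)` over `m ≤ a n`. Each term tends to `W_r(m)` and is at most
`2 ^ r * W_r(m)`, so dominated convergence applies once `∑ W_r(m)` is known to converge. For this,
`1 / k! ^ r ≤ 1 / k!` bounds the sum of `p(λ) ^ r` over all partitions of all integers by
`∏ j, ∑ k, (j ^ (-r)) ^ k / k! = exp (∑ j, j ^ (-r))`.
-/

open Filter Finset Topology
open scoped Nat

section Analysis

variable {α β ι G : Type*}

theorem tendsto_finset_sum_of_dominated_convergence [NormedAddCommGroup G] [CompleteSpace G]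
    {l : Filter α} {S : α → Finset β} {f : α → β → G} {g : β → G} {bound : β → ℝ}
    (hS : Tendsto S l atTop) (h_sum : Summable bound)
    (h_lim : ∀ k, Tendsto (f · k) l (𝓝 (g k)))
    (h_bound : ∀ᶠ n in l, ∀ k ∈ S n, ‖f n k‖ ≤ bound k) :
    Tendsto (fun n => ∑ k ∈ S n, f n k) l (𝓝 (∑' k, g k)) := by
  rcases l.eq_or_neBot with rfl | _
  · exact tendsto_bot
  have h_mem (k : β) : ∀ᶠ n in l, k ∈ S n := by
    filter_upwards [hS.eventually_ge_atTop {k}] with n hn using singleton_subset_iff.1 hn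
  have h_nonneg (k : β) : 0 ≤ bound k := by
    obtain ⟨n, hn, hk⟩ := (h_bound.and (h_mem k)).exists
    exact (norm_nonneg _).trans (hn k hk)
  have h_tsum (n : α) : ∑' k, Set.indicator (S n : Set β) (f n) k = ∑ k ∈ S n, f n k :=
    (sum_eq_tsum_indicator (f n) (S n)).symm
  simp only [← h_tsum]
  refine tendsto_tsum_of_dominated_convergence h_sum (fun k => (h_lim k).congr' ?_) ?_
  · filter_upwards [h_mem k] with n hk
    exact (Set.indicator_of_mem (mem_coe.2 hk) (f n)).symm
  · filter_upwards [h_bound] with n hn k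
    by_cases hk : k ∈ S n
    · simpa [hk] using hn k hk
    · simpa [hk] using h_nonneg k

theorem sum_finsupp_prod_eq_prod_sum {M R : Type*} [Zero M] [CommSemiring R] {f : ι → M → R}
    (hf : ∀ i, f i 0 = 1) (s : Finset ι) (t : ι → Finset M) :
    ∑ c ∈ s.finsupp t, c.prod f = ∏ i ∈ s, ∑ k ∈ t i, f i k := by
  rw [prod_sum, Finset.finsupp, sum_map]
  exact sum_congr rfl fun p _ =>
    Finsupp.prod_indicator_index_eq_prod_attach p fun i _ => hf i

theorem sum_pow_div_factorial_le_exp {x : ℝ} (hx : 0 ≤ x) (t : Finset ℕ) :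
    ∑ k ∈ t, x ^ k / k ! ≤ Real.exp x := by
  rw [Real.exp_eq_exp_ℝ]
  exact sum_le_hasSum t (fun k _ => by positivity) (NormedSpace.expSeries_div_hasSum_exp x)

theorem summable_finsupp_prod_pow_div_factorial {x : ι → ℝ} (hx₀ : ∀ i, 0 ≤ x i)
    (hx : Summable x) : Summable fun c : ι →₀ ℕ => c.prod fun i k => x i ^ k / k ! := by
  have h_nonneg (c : ι →₀ ℕ) : 0 ≤ c.prod fun i k => x i ^ k / k ! :=
    prod_nonneg fun i _ => div_nonneg (pow_nonneg (hx₀ i) _) (Nat.cast_nonneg _)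
  refine summable_of_sum_le h_nonneg (c := Real.exp (∑' i, x i)) fun F => ?_
  let s : Finset ι := F.biUnion Finsupp.support
  let t : ι → Finset ℕ := fun i => F.image (· i)
  have h_sub : F ⊆ s.finsupp t := fun c hc =>
    mem_finsupp_iff.2 ⟨subset_biUnion_of_mem Finsupp.support hc,
      fun i _ => mem_image_of_mem (· i) hc⟩
  calc ∑ c ∈ F, c.prod (fun i k => x i ^ k / (k ! : ℝ))
      ≤ ∑ c ∈ s.finsupp t, c.prod fun i k => x i ^ k / (k ! : ℝ) :=
        sum_le_sum_of_subset_of_nonneg h_sub fun c _ _ => h_nonneg c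
    _ = ∏ i ∈ s, ∑ k ∈ t i, x i ^ k / (k ! : ℝ) :=
        sum_finsupp_prod_eq_prod_sum (fun i => by simp) s t
    _ ≤ ∏ i ∈ s, Real.exp (x i) :=
        prod_le_prod
          (fun i _ => sum_nonneg fun k _ => div_nonneg (pow_nonneg (hx₀ i) k) (Nat.cast_nonneg _))
          fun i _ => sum_pow_div_factorial_le_exp (hx₀ i) (t i)
    _ = Real.exp (∑ i ∈ s, x i) := (Real.exp_sum s x).symm
    _ ≤ Real.exp (∑' i, x i) := Real.exp_le_exp.2 (hx.sum_le_tsum s fun i _ => hx₀ i)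

theorem tendsto_natCast_div_sub_rpow (s : ℝ) (m : ℕ) :
    Tendsto (fun n : ℕ => ((n : ℝ) / (n - m)) ^ s) atTop (𝓝 1) := by
  have h : Tendsto (fun n : ℕ => (n : ℝ) / (n - m)) atTop (𝓝 1) := by
    simpa [sub_eq_add_neg] using tendsto_natCast_div_add_atTop (-(m : ℝ))
  simpa using h.rpow_const (Or.inl one_ne_zero)

theorem div_sub_rpow_le_two_rpow {s : ℝ} (hs : 0 ≤ s) {x y : ℝ} (hy : 0 ≤ y) (h : 2 * y < x) :
    (x / (x - y)) ^ s ≤ 2 ^ s := by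
  have h_pos : 0 < x - y := by linarith
  refine Real.rpow_le_rpow (div_nonneg (by linarith) h_pos.le) ?_ hs
  rw [div_le_iff₀ h_pos]
  linarith

theorem tendsto_sum_range_div_sub_rpow_mul {s : ℝ} (hs : 0 ≤ s) {w : ℕ → ℝ} (hw : Summable w)
    {N : ℕ → ℕ} (hN : Tendsto N atTop atTop) (hN_lt : ∀ᶠ n in atTop, 2 * N n < n) :
    Tendsto (fun n : ℕ => ∑ m ∈ range (N n + 1), ((n : ℝ) / (n - m)) ^ s * w m) atTop
      (𝓝 (∑' m, w m)) := by
  refine tendsto_finset_sum_of_dominated_convergence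
    (tendsto_finset_range.comp ((tendsto_add_atTop_nat 1).comp hN))
    (hw.norm.mul_left (2 ^ s)) (fun m => ?_) ?_
  · simpa using (tendsto_natCast_div_sub_rpow s m).mul_const (w m)
  · filter_upwards [hN_lt] with n hn m hm
    have h_lt : 2 * (m : ℝ) < n := by
      have := mem_range.1 hm
      exact_mod_cast (by omega : 2 * m < n)
    have h_pos : (0 : ℝ) < n - m := by linarith [m.cast_nonneg (α := ℝ)]
    rw [norm_mul, Real.norm_of_nonneg (by positivity)]
    exact mul_le_mul_of_nonneg_right (div_sub_rpow_le_two_rpow hs m.cast_nonneg h_lt)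
      (norm_nonneg _)

theorem two_mul_natFloor_lt {a : ℝ} {n : ℕ} (ha₀ : 0 ≤ a) (ha : 2 * a < n) : 2 * ⌊a⌋₊ < n := by
  have := Nat.floor_le ha₀
  exact_mod_cast (by linarith : (2 : ℝ) * ⌊a⌋₊ < n)

end Analysis

section Partition

variable {n t : ℕ}

theorem multiset_sup_mem {α : Type*} [LinearOrder α] [OrderBot α] {s : Multiset α} (hs : s ≠ 0) :
    s.sup ∈ s := by
  obtain ⟨a, ha, h_sup⟩ :=
    exists_mem_eq_sup s.toFinset (Multiset.toFinset_nonempty.2 hs) id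
  rw [Finset.sup_def, Multiset.map_id, Multiset.toFinset_val, Multiset.sup_dedup] at h_sup
  rw [h_sup]
  exact Multiset.mem_toFinset.1 ha

theorem partition_sup_parts_le (μ : n.Partition) : μ.parts.sup ≤ n :=
  Multiset.sup_le.2 fun _ => Nat.Partition.le_of_mem_parts

theorem partition_add_le_of_mem_erase (μ : n.Partition) (ht : t ∈ μ.parts) {j : ℕ}
    (hj : j ∈ μ.parts.erase t) : t + j ≤ n := by
  rw [← μ.parts_sum, ← Multiset.cons_erase ht, Multiset.sum_cons]
  exact Nat.add_le_add_left (Multiset.le_sum_of_mem hj) t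

theorem partition_sup_parts_eq_iff_mem (μ : n.Partition) (ht : n < 2 * t) :
    μ.parts.sup = t ↔ t ∈ μ.parts := by
  constructor
  · rintro rfl
    refine multiset_sup_mem fun h => ?_
    simp [h] at ht
  · intro h_mem
    refine le_antisymm (Multiset.sup_le.2 fun j hj => ?_) (Multiset.le_sup h_mem)
    by_contra! h_lt
    have := partition_add_le_of_mem_erase μ h_mem ((Multiset.mem_erase_of_ne h_lt.ne').2 hj)
    omega

/-- The contribution `1 / (j ^ k * k!)` to `pOf` of having exactly `k` parts equal to `j`, so that
`pOf` becomes a product over the finitely supported function of multiplicities. -/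
noncomputable def cycleWeight (j k : ℕ) : ℝ := 1 / ((j : ℝ) ^ k * k !)

@[simp]
theorem cycleWeight_zero (j : ℕ) : cycleWeight j 0 = 1 := by simp [cycleWeight]

theorem cycleWeight_nonneg (j k : ℕ) : 0 ≤ cycleWeight j k := by
  unfold cycleWeight; positivity

theorem cycleWeight_rpow_le {s : ℝ} (hs : 1 ≤ s) (j k : ℕ) :
    cycleWeight j k ^ s ≤ (((j : ℝ) ^ s)⁻¹) ^ k / k ! := by
  have h_fac : (k ! : ℝ) ≤ (k ! : ℝ) ^ s :=
    Real.self_le_rpow_of_one_le (by exact_mod_cast k.factorial_pos) hs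
  calc cycleWeight j k ^ s = (((j : ℝ) ^ s)⁻¹) ^ k / (k ! : ℝ) ^ s := by
        rw [cycleWeight, one_div, Real.inv_rpow (by positivity),
          Real.mul_rpow (by positivity) (by positivity), ← Real.rpow_pow_comm (by positivity),
          mul_inv, inv_pow, div_eq_mul_inv]
    _ ≤ (((j : ℝ) ^ s)⁻¹) ^ k / k ! := by gcongr

theorem pOf_eq_finsupp_prod (μ : n.Partition) : pOf μ = μ.parts.toFinsupp.prod cycleWeight := by
  have h_support : μ.parts.toFinsupp.support ⊆ Icc 1 n := fun j hj => by
    have hj : j ∈ μ.parts := by simpa using hj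
    exact mem_Icc.2 ⟨μ.parts_pos hj, Nat.Partition.le_of_mem_parts hj⟩
  rw [Finsupp.prod_of_support_subset _ h_support _ fun j _ => cycleWeight_zero j]
  rfl

theorem pOf_nonneg (μ : n.Partition) : 0 ≤ pOf μ := by
  unfold pOf; positivity

theorem pOf_rpow_le {s : ℝ} (hs : 1 ≤ s) (μ : n.Partition) :
    pOf μ ^ s ≤ μ.parts.toFinsupp.prod fun j k => (((j : ℝ) ^ s)⁻¹) ^ k / k ! := by
  rw [pOf_eq_finsupp_prod, Finsupp.prod,
    ← Real.finsetProd_rpow _ _ fun j _ => cycleWeight_nonneg j _]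
  exact prod_le_prod (fun j _ => Real.rpow_nonneg (cycleWeight_nonneg j _) s)
    fun j _ => cycleWeight_rpow_le hs j _

theorem pOf_eq_inv_mul_pOf_erase (ht : n < 2 * t) (htn : t ≤ n)
    (μ : {μ : n.Partition // t ∈ μ.parts}) :
    pOf μ.1 = (t : ℝ)⁻¹ * pOf (Nat.Partition.partitionWithPartEquiv (by omega) htn μ) := by
  have h_notMem : t ∉ μ.1.parts.erase t := fun h => by
    have := partition_add_le_of_mem_erase μ.1 μ.2 h
    omega
  rw [pOf_eq_finsupp_prod, pOf_eq_finsupp_prod,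
    Nat.Partition.partitionWithPartEquiv_apply_parts, ← Multiset.cons_erase μ.2,
    ← Multiset.singleton_add, Multiset.toFinsupp_add, Multiset.toFinsupp_singleton,
    Finsupp.prod_add_index_of_disjoint, Finsupp.prod_single_index (cycleWeight_zero t)]
  · simp [cycleWeight]
  · simpa using h_notMem

end Partition

section PowerSums

variable {s : ℝ}

/-- The sum `W_s(m)` for a real exponent `s`. -/
noncomputable def pOfPowSum (s : ℝ) (m : ℕ) : ℝ :=
  ∑ μ : m.Partition, pOf μ ^ s

/-- The sum `Σ_C(n)` for a real exponent `s` and an arbitrary cutoff `a` in place of `a(n)`. -/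
noncomputable def largePartPowSum (s a : ℝ) (n : ℕ) : ℝ :=
  ∑ μ : n.Partition with (n : ℝ) - a ≤ μ.parts.sup, pOf μ ^ s

theorem toFinsupp_parts_injective :
    Function.Injective fun x : Σ m, Nat.Partition m => x.2.parts.toFinsupp := by
  rintro ⟨m, μ⟩ ⟨m', μ'⟩ h
  have h_parts : μ.parts = μ'.parts := Multiset.toFinsupp.injective h
  obtain rfl : m = m' := by rw [← μ.parts_sum, ← μ'.parts_sum, h_parts]
  rw [Nat.Partition.ext h_parts]

theorem summable_pOfPowSum (hs : 1 < s) : Summable (pOfPowSum s) := by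
  have h_all : Summable fun x : Σ m, Nat.Partition m => pOf x.2 ^ s :=
    .of_nonneg_of_le (fun x => Real.rpow_nonneg (pOf_nonneg x.2) s)
      (fun x => pOf_rpow_le hs.le x.2)
      ((summable_finsupp_prod_pow_div_factorial (fun j => by positivity)
        (Real.summable_nat_rpow_inv.2 hs)).comp_injective toFinsupp_parts_injective)
  exact h_all.sigma.congr fun m => tsum_fintype _

theorem sum_sup_parts_eq_pOf_rpow {n t : ℕ} (ht : n < 2 * t) (htn : t ≤ n) :
    ∑ μ : n.Partition with μ.parts.sup = t, pOf μ ^ s =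
      (t : ℝ) ^ (-s) * pOfPowSum s (n - t) := by
  simp only [partition_sup_parts_eq_iff_mem _ ht]
  rw [pOfPowSum, mul_sum, ← sum_subtype_eq_sum_filter, subtype_univ,
    ← (Nat.Partition.partitionWithPartEquiv (by omega) htn).sum_comp]
  refine sum_congr rfl fun μ _ => ?_
  rw [pOf_eq_inv_mul_pOf_erase ht htn, Real.mul_rpow (by positivity) (pOf_nonneg _),
    Real.inv_rpow (Nat.cast_nonneg t), Real.rpow_neg (Nat.cast_nonneg t)]

theorem largePartPowSum_eq_sum_range {n : ℕ} {a : ℝ} (ha₀ : 0 ≤ a) (ha : 2 * a < n) :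
    largePartPowSum s a n =
      ∑ m ∈ range (⌊a⌋₊ + 1), ((n : ℝ) - m) ^ (-s) * pOfPowSum s m := by
  have h_floor := two_mul_natFloor_lt ha₀ ha
  have h_mem (μ : n.Partition) :
      (n : ℝ) - a ≤ μ.parts.sup ↔ n - μ.parts.sup ∈ range (⌊a⌋₊ + 1) := by
    rw [mem_range, Nat.lt_succ_iff, Nat.le_floor_iff ha₀,
      Nat.cast_sub (partition_sup_parts_le μ), sub_le_comm]
  simp only [largePartPowSum, h_mem]
  rw [← sum_fiberwise_of_maps_to fun μ hμ => (mem_filter.1 hμ).2]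
  refine sum_congr rfl fun m hm => ?_
  have hm' : m ≤ ⌊a⌋₊ := Nat.lt_succ_iff.1 (mem_range.1 hm)
  have h_fiber (μ : n.Partition) :
      n - μ.parts.sup ∈ range (⌊a⌋₊ + 1) ∧ n - μ.parts.sup = m ↔ μ.parts.sup = n - m := by
    have := partition_sup_parts_le μ
    rw [mem_range]
    omega
  simp only [filter_filter, h_fiber]
  rw [sum_sup_parts_eq_pOf_rpow (by omega) (Nat.sub_le n m), Nat.sub_sub_self (by omega),
    Nat.cast_sub (by omega)]

theorem stmt_17_general (hs : 1 < s) {a : ℕ → ℝ} (ha : Tendsto a atTop atTop)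
    (ha_lt : ∀ᶠ n in atTop, 2 * a n < n) :
    Tendsto (fun n : ℕ => (n : ℝ) ^ s * largePartPowSum s (a n) n) atTop
      (𝓝 (∑' m, pOfPowSum s m)) := by
  have h_cut : ∀ᶠ n in atTop, 0 ≤ a n ∧ 2 * a n < n := (ha.eventually_ge_atTop 0).and ha_lt
  refine (tendsto_sum_range_div_sub_rpow_mul (by linarith) (summable_pOfPowSum hs)
    (tendsto_nat_floor_atTop.comp ha)
    (h_cut.mono fun n hn => two_mul_natFloor_lt hn.1 hn.2)).congr' ?_
  filter_upwards [h_cut] with n ⟨ha₀, ha⟩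
  rw [largePartPowSum_eq_sum_range ha₀ ha, mul_sum]
  refine sum_congr rfl fun m hm => ?_
  have h_pos : (0 : ℝ) < n - m := by
    have := two_mul_natFloor_lt ha₀ ha
    have := mem_range.1 hm
    exact sub_pos.2 (by exact_mod_cast (by omega : m < n))
  rw [Real.div_rpow n.cast_nonneg h_pos.le, Real.rpow_neg h_pos.le, div_eq_mul_inv, mul_assoc]

end PowerSums

section Cutoff

theorem tendsto_aCut_atTop : Tendsto aCut atTop atTop :=
  ((tendsto_rpow_atTop (by norm_num)).comp tendsto_natCast_atTop_atTop).const_mul_atTop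
    (by norm_num)

theorem two_mul_aCut_lt {n : ℕ} (hn : 0 < n) : 2 * aCut n < n := by
  have h_one : (1 : ℝ) ≤ n := by exact_mod_cast hn
  have h_rpow : (n : ℝ) ^ ((2 : ℝ) / 3) ≤ n :=
    Real.rpow_le_self_of_one_le h_one (by norm_num)
  unfold aCut
  linarith

theorem W_eq_pOfPowSum (r m : ℕ) : W r m = pOfPowSum r m := by
  simp only [W, pOfPowSum, Real.rpow_natCast]

theorem SigmaC_eq_largePartPowSum (r n : ℕ) : SigmaC r n = largePartPowSum r (aCut n) n := by
  simp only [SigmaC, largePartPowSum, Real.rpow_natCast, Nat.cast_le, partition_sup_parts_le,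
    and_true]

end Cutoff

theorem stmt_17 (r : ℕ) (hr : 2 ≤ r) :
    Filter.Tendsto (fun n : ℕ => (n : ℝ) ^ r * SigmaC r n) Filter.atTop
      (nhds (∑' m : ℕ, W r m)) := by
  simpa only [SigmaC_eq_largePartPowSum, W_eq_pOfPowSum, Real.rpow_natCast] using
    stmt_17_general (s := r) (by exact_mod_cast hr) tendsto_aCut_atTop
      ((eventually_gt_atTop 0).mono fun _ => two_mul_aCut_lt)
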